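/- arXiv:math/0507271 — 2 statements merged into one kernel-verified Lean document; each statement's English description precedes it below -/
import Mathlib

section
/- For every n ≥ 3, the domination cover pebbling number of the path P_n satisfies ψ(P_n) = (Σ_{i=0}^{k_n} 2^{n−2−3i}) + ⌊α_n/2⌋ = 2^{n+1}·(1 − 8^{−(k_n+1)})/7 + ⌊α_n/2⌋, where α_n ∈ {0,1,2} and k_n ≥ 0 are the unique integers with n − 2 = α_n + 3·k_n. -/
/-!
Write `f` for the sequence `f 0 = 0`, `f 1 = f 2 = 1`, `f (n + 3) = 2 ^ (n + 1) + f n`; the sum in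
the theorem is `f n` (`pathPsi_eq`), and it is shown that `ψ(P_n) = f n`. Vertices are numbered
from `0`, and configurations are extended to functions `ℕ → ℕ`.

*Lower bound.* Give vertex `i` the weight `2 ^ i`. No move increases the total weight
(`weight_reach`), and a configuration whose support dominates `P_n` has weight at least `f n`
(`pathPsi_le_weight`): the vertex `n - 1` forces weight at least `2 ^ (n - 2)` at or beyond
`n - 2`, and the first `n - 3` vertices are dominated by pebbles before that. Hence `f n - 1`
pebbles placed on vertex `0` cannot be turned into a dominating configuration.

*Upper bound* (`solv_of_le_sum`). Induct from `n` to `n + 3`. If at least `f n` pebbles lie on the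
first `n` vertices, then at least `f n` of these can be reserved for `P_n` while the others, with
the pebbles on the last three vertices, dominate the last three (`solv_of_first`). This is clear
if the last three vertices carry many pebbles; otherwise it follows from the fact that `2 ^ d`
pebbles on `P_{d+1}` can bring a pebble to its end (`reach_end`). The same applies after
reflecting the path. One of the two orientations has at least `f n` pebbles on its first
`n` vertices as soon as `n ≥ 3`, because the two sets of `n` vertices then cover the path and
`2 * f n ≤ f (n + 3)`. For `n = 1, 2` the only exceptions have all their pebbles in the middle of
the path and are solved directly.
-/

/-- A single pebbling move on graph `G`: remove two pebbles from a vertex `u`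
carrying at least two pebbles and add one pebble on an adjacent vertex `v`. -/
def PebblingMove {V : Type*} [DecidableEq V] (G : SimpleGraph V) (C C' : V → ℕ) : Prop :=
  ∃ u v : V, G.Adj u v ∧ 2 ≤ C u ∧
    C' = Function.update (Function.update C u (C u - 2)) v (C v + 1)

/-- `D` is a dominating set of `G`: every vertex is in `D` or adjacent to a vertex of `D`. -/
def IsDomSet {V : Type*} (G : SimpleGraph V) (D : Set V) : Prop :=
  ∀ v : V, v ∈ D ∨ ∃ u ∈ D, G.Adj u v

/-- A configuration is domination-cover-solvable if some (possibly empty) sequence of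
pebbling moves leads to a configuration whose set of pebbled vertices dominates `G`. -/
def DomCoverSolvable {V : Type*} [DecidableEq V] (G : SimpleGraph V) (C : V → ℕ) : Prop :=
  ∃ C' : V → ℕ, Relation.ReflTransGen (PebblingMove G) C C' ∧ IsDomSet G {v | 0 < C' v}

/-- The set of numbers `k` such that every configuration with at least `k` pebbles is
domination-cover-solvable; the domination cover pebbling number `ψ(G)` is its
least element. -/
def DomCoverSet {V : Type*} [Fintype V] [DecidableEq V] (G : SimpleGraph V) : Set ℕ :=
  {k | ∀ C : V → ℕ, k ≤ ∑ v, C v → DomCoverSolvable G C}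

open Finset

/-- The values of the domination cover pebbling number of paths, defined by their recursion. -/
def pathPsi : ℕ → ℕ
  | 0 => 0
  | 1 => 1
  | 2 => 1
  | (n + 3) => 2 ^ (n + 1) + pathPsi n

/-- A pebbling move on the path with vertices `0, …, n - 1`, for configurations on `ℕ`: `B` is the
part of the configuration not involved in the move. Pebbles at `n` and beyond are inert. -/
def Mv (n : ℕ) (C C' : ℕ → ℕ) : Prop :=
  ∃ (B : ℕ → ℕ) (i j : ℕ), i < n ∧ j < n ∧ (j = i + 1 ∨ i = j + 1) ∧
    C = B + Pi.single i 2 ∧ C' = B + Pi.single j 1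

/-- Reachability by pebbling moves on the path with vertices `0, …, n - 1`. -/
abbrev Reach (n : ℕ) : (ℕ → ℕ) → (ℕ → ℕ) → Prop := Relation.ReflTransGen (Mv n)

/-- Vertex `i` carries a pebble or is adjacent to a pebbled vertex among `0, …, n - 1`. -/
def Dom (n : ℕ) (C : ℕ → ℕ) (i : ℕ) : Prop := ∃ j < n, 0 < C j ∧ j ≤ i + 1 ∧ i ≤ j + 1

/-- Domination cover solvability on the path with vertices `0, …, n - 1`. -/
def Solv (n : ℕ) (C : ℕ → ℕ) : Prop := ∃ D, Reach n C D ∧ ∀ i < n, Dom n D i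

/-! ### Reachability on paths -/

lemma Reach.add_right {n : ℕ} {C C' : ℕ → ℕ} (h : Reach n C C') (E : ℕ → ℕ) :
    Reach n (C + E) (C' + E) := by
  refine Relation.ReflTransGen.lift (fun X => X + E) ?_ _ _ h
  rintro X Y ⟨B, i, j, hi, hj, hij, rfl, rfl⟩
  exact ⟨B + E, i, j, hi, hj, hij, by dsimp only; abel, by dsimp only; abel⟩

lemma Reach.add {n : ℕ} {C C' D D' : ℕ → ℕ} (h : Reach n C C') (h' : Reach n D D') :
    Reach n (C + D) (C' + D') := by
  have h2 := h'.add_right C'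
  rw [add_comm D, add_comm D'] at h2
  exact (h.add_right D).trans h2

lemma Reach.mono {n m : ℕ} (hnm : n ≤ m) {C C' : ℕ → ℕ} (h : Reach n C C') : Reach m C C' := by
  refine Relation.ReflTransGen.mono ?_ _ _ h
  rintro X Y ⟨B, i, j, hi, hj, hij, rfl, rfl⟩
  exact ⟨B, i, j, by omega, by omega, hij, rfl, rfl⟩

lemma eq_add_single {C : ℕ → ℕ} {i t : ℕ} (h : t ≤ C i) : C = (C - Pi.single i t) + Pi.single i t := by
  funext k
  by_cases hk : k = i
  · subst hk; simp; omega
  · simp [hk]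

lemma reach_move {n : ℕ} {C : ℕ → ℕ} {i j : ℕ} (hi : i < n) (hj : j < n)
    (hij : j = i + 1 ∨ i = j + 1) (h : 2 ≤ C i) :
    Reach n C (C - Pi.single i 2 + Pi.single j 1) :=
  Relation.ReflTransGen.single ⟨_, i, j, hi, hj, hij, eq_add_single h, rfl⟩

lemma exists_sub_sum (n : ℕ) (C : ℕ → ℕ) (t : ℕ) (h : t ≤ ∑ i ∈ range n, C i) :
    ∃ A E : ℕ → ℕ, C = A + E ∧ ∑ i ∈ range n, A i = t := by
  induction n generalizing t with
  | zero => exact ⟨0, C, by simp, by simp at h; simp [h]⟩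
  | succ n ih =>
    rw [sum_range_succ] at h
    obtain ⟨A, E, hC, hA⟩ := ih (min t (∑ i ∈ range n, C i)) (min_le_right _ _)
    have hc : ∀ k, C k = A k + E k := fun k => congrFun hC k
    refine ⟨fun k => if k = n then t - min t (∑ i ∈ range n, C i) else A k,
      fun k => if k = n then C n - (t - min t (∑ i ∈ range n, C i)) else E k, ?_, ?_⟩
    · funext k
      by_cases hk : k = n
      · subst hk; simp; omega
      · simp [hk, hc]
    · rw [sum_range_succ, sum_congr rfl (g := A)]
      · simp [hA]
      · intro x hx
        simp [(mem_range.1 hx).ne]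

/-- The pebbling number of a path with `d + 1` vertices is at most `2 ^ d` for an end vertex. -/
lemma reach_end (d : ℕ) (C : ℕ → ℕ) (h : 2 ^ d ≤ ∑ i ∈ range (d + 1), C i) :
    ∃ B, Reach (d + 1) C B ∧ 1 ≤ B d := by
  induction d generalizing C with
  | zero => exact ⟨C, .refl, by simpa using h⟩
  | succ d ih =>
    by_cases hc : 1 ≤ C (d + 1)
    · exact ⟨C, .refl, hc⟩
    rw [sum_range_succ] at h
    obtain ⟨A, E, hC, hA⟩ := exists_sub_sum (d + 1) C (2 ^ d) (by rw [pow_succ] at h; omega)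
    have hE : 2 ^ d ≤ ∑ i ∈ range (d + 1), E i := by
      have : ∑ i ∈ range (d + 1), C i = ∑ i ∈ range (d + 1), A i + ∑ i ∈ range (d + 1), E i := by
        rw [hC, ← sum_add_distrib]; rfl
      rw [pow_succ] at h
      omega
    obtain ⟨A', hA', hA1⟩ := ih A hA.ge
    obtain ⟨E', hE', hE1⟩ := ih E hE
    have h1 : Reach (d + 1 + 1) C (A' + E') := by
      rw [hC]; exact (hA'.add hE').mono (by omega)
    refine ⟨_, h1.trans (reach_move (i := d) (j := d + 1) (by omega) (by omega) (Or.inl rfl) ?_), ?_⟩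
    · simp; omega
    · simp

lemma Dom.add_left {n m : ℕ} (h : n ≤ m) {C : ℕ → ℕ} {i : ℕ} (hd : Dom n C i) (E : ℕ → ℕ) :
    Dom m (E + C) i := by
  obtain ⟨j, hj, h0, h1, h2⟩ := hd
  exact ⟨j, by omega, by simp; omega, h1, h2⟩

/-! ### Upper bound -/

/-- The inductive step when the pebbles split into a part `A` that takes care of the last three
vertices and a part `E` large enough for the first `n` vertices. -/
lemma solv_of_split {n : ℕ} (ih : ∀ C : ℕ → ℕ, pathPsi n ≤ ∑ i ∈ range n, C i → Solv n C)
    {A B E : ℕ → ℕ} (hr : Reach (n + 3) A B)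
    (hB : ∀ i, n ≤ i → i < n + 3 → Dom (n + 3) B i)
    (hE : pathPsi n ≤ ∑ i ∈ range n, E i) : Solv (n + 3) (A + E) := by
  obtain ⟨E', hE', hd⟩ := ih E hE
  refine ⟨B + E', hr.add (hE'.mono (by omega)), fun i hi => ?_⟩
  by_cases h : i < n
  · exact (hd i h).add_left (by omega) _
  · have := (hB i (by omega) hi).add_left le_rfl E'
    rwa [add_comm E' B] at this

lemma dom_of_mid {n : ℕ} {B : ℕ → ℕ} (h : 1 ≤ B (n + 1)) (i : ℕ) (h1 : n ≤ i) (h2 : i < n + 3) :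
    Dom (n + 3) B i := ⟨n + 1, by omega, h, by omega, by omega⟩

lemma dom_of_outer {n : ℕ} {B : ℕ → ℕ} (h : 1 ≤ B n) (h' : 1 ≤ B (n + 2)) (i : ℕ) (h1 : n ≤ i)
    (h2 : i < n + 3) : Dom (n + 3) B i := by
  by_cases hi : i = n + 2
  · exact ⟨n + 2, by omega, h', by omega, by omega⟩
  · exact ⟨n, by omega, h, by omega, by omega⟩

lemma solv_of_first {n : ℕ} (ih : ∀ C : ℕ → ℕ, pathPsi n ≤ ∑ i ∈ range n, C i → Solv n C)
    (C : ℕ → ℕ) (hC : pathPsi (n + 3) ≤ ∑ i ∈ range (n + 3), C i)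
    (hF : pathPsi n ≤ ∑ i ∈ range n, C i) : Solv (n + 3) C := by
  have hpow : 1 ≤ 2 ^ n := Nat.one_le_two_pow
  have hsum : 2 * 2 ^ n + pathPsi n ≤ ∑ i ∈ range n, C i + C n + C (n + 1) + C (n + 2) := by
    simpa [pathPsi, sum_range_succ, pow_succ, mul_comm] using hC
  -- `L` and `F` are the parts of `C` on the last three and on the first `n` vertices.
  set L : ℕ → ℕ := fun i => if i < n then 0 else C i with hL
  set F : ℕ → ℕ := fun i => if i < n then C i else 0 with hFd
  have hCLF : C = L + F := by
    funext i; by_cases h : i < n <;> simp [hL, hFd, h]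
  have hFs : ∑ i ∈ range n, F i = ∑ i ∈ range n, C i :=
    sum_congr rfl fun i hi => by simp [hFd, mem_range.1 hi]
  have hL0 : L n = C n := by simp [hL]
  have hL1 : L (n + 1) = C (n + 1) := by simp [hL]
  have hL2 : L (n + 2) = C (n + 2) := by simp [hL]
  have key : ∀ B, Reach (n + 3) L B → (∀ i, n ≤ i → i < n + 3 → Dom (n + 3) B i) →
      Solv (n + 3) C := fun B h1 h2 => by
    rw [hCLF]; exact solv_of_split ih h1 h2 (by omega)
  -- `t` pebbles of `F` may be spent on the last three vertices.
  have key2 : ∀ t, t + pathPsi n ≤ ∑ i ∈ range n, C i → ∃ A E, C = (A + L) + E ∧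
      (∑ i ∈ range n, A i = t) ∧ pathPsi n ≤ ∑ i ∈ range n, E i := by
    intro t ht
    obtain ⟨A, E, h1, h2⟩ := exists_sub_sum n F t (by omega)
    refine ⟨A, E, ?_, h2, ?_⟩
    · rw [hCLF, h1]; abel
    · have : ∑ i ∈ range n, F i = ∑ i ∈ range n, A i + ∑ i ∈ range n, E i := by
        rw [h1, ← sum_add_distrib]; rfl
      omega
  by_cases hy : 1 ≤ C (n + 1)
  · exact key L .refl (dom_of_mid (by omega))
  by_cases hx : 2 ≤ C n
  · exact key _ (reach_move (i := n) (j := n + 1) (by omega) (by omega) (Or.inl rfl) (by omega))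
      (dom_of_mid (by simp))
  by_cases hz : 2 ≤ C (n + 2)
  · exact key _ (reach_move (i := n + 2) (j := n + 1) (by omega) (by omega) (Or.inr rfl) (by omega))
      (dom_of_mid (by simp))
  by_cases hxz : 1 ≤ C n ∧ 1 ≤ C (n + 2)
  · exact key L .refl (dom_of_outer (by omega) (by omega))
  by_cases h0 : C n = 0 ∧ C (n + 2) = 0
  · obtain ⟨A, E, hCe, hA, hE⟩ := key2 (2 ^ (n + 1)) (by rw [pow_succ]; omega)
    obtain ⟨B, hB, hB1⟩ := reach_end (n + 1) A (by rw [sum_range_succ, sum_range_succ]; omega)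
    rw [hCe]
    exact solv_of_split ih ((hB.mono (by omega)).add_right L) (dom_of_mid (by simp; omega)) hE
  obtain ⟨A, E, hCe, hA, hE⟩ := key2 (2 ^ n) (by omega)
  obtain ⟨B, hB, hB1⟩ := reach_end n A (by rw [sum_range_succ]; omega)
  have hBL := (hB.mono (show n + 1 ≤ n + 3 by omega)).add_right L
  rw [hCe]
  by_cases hx1 : 1 ≤ C n
  · refine solv_of_split ih (hBL.trans
      (reach_move (i := n) (j := n + 1) (by omega) (by omega) (Or.inl rfl) ?_))
      (dom_of_mid (by simp)) hE
    simp; omega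
  · exact solv_of_split ih hBL (dom_of_outer (by simp; omega) (by simp; omega)) hE

/-- Reflection of the vertices `0, …, n - 1`, extended by the identity so that it is an involution
of `ℕ`. -/
def rv (n i : ℕ) : ℕ := if i < n then n - 1 - i else i

lemma rv_rv (n i : ℕ) : rv n (rv n i) = i := by
  unfold rv; split_ifs <;> omega

lemma single_rv (n i t : ℕ) : (Pi.single i t : ℕ → ℕ) ∘ rv n = Pi.single (rv n i) t := by
  funext k
  have : rv n k = i ↔ k = rv n i :=
    ⟨fun h => by rw [← h, rv_rv], fun h => by rw [h, rv_rv]⟩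
  simp [Pi.single_apply, this]

lemma solv_of_rv {n : ℕ} {C : ℕ → ℕ} (h : Solv n (C ∘ rv n)) : Solv n C := by
  obtain ⟨D, hD, hd⟩ := h
  refine ⟨D ∘ rv n, ?_, ?_⟩
  · have : Reach n ((C ∘ rv n) ∘ rv n) (D ∘ rv n) := by
      refine Relation.ReflTransGen.lift (fun X => X ∘ rv n) ?_ _ _ hD
      rintro X Y ⟨B, i, j, hi, hj, hij, rfl, rfl⟩
      refine ⟨B ∘ rv n, rv n i, rv n j, ?_, ?_, ?_, ?_, ?_⟩
      · simp [rv, hi]; omega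
      · simp [rv, hj]; omega
      · simp [rv, hi, hj]; omega
      · rw [← single_rv]; rfl
      · rw [← single_rv]; rfl
    have e : (C ∘ rv n) ∘ rv n = C := by funext k; simp [rv_rv]
    rwa [e] at this
  · intro i hi
    obtain ⟨j, hj, h0, h1, h2⟩ := hd (rv n i) (by simp [rv, hi]; omega)
    refine ⟨rv n j, by simp [rv, hj]; omega, by simpa [rv_rv] using h0, ?_, ?_⟩
    all_goals
      simp only [rv, if_pos hi, if_pos hj] at h1 h2 ⊢
      omega

lemma pathPsi_le : ∀ n, pathPsi n ≤ 2 ^ (n + 1)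
  | 0 => by simp [pathPsi]
  | 1 => by simp [pathPsi]
  | 2 => by simp [pathPsi]
  | (n + 3) => by
    have := pathPsi_le n
    simp only [pathPsi, pow_succ] at *
    omega

theorem solv_of_le_sum : ∀ (n : ℕ) (C : ℕ → ℕ), pathPsi n ≤ ∑ i ∈ range n, C i → Solv n C
  | 0, C, _ => ⟨C, .refl, by simp⟩
  | 1, C, h => ⟨C, .refl, fun i hi => ⟨0, by omega, by
      simp [pathPsi] at h; omega, by omega, by omega⟩⟩
  | 2, C, h => by
    refine ⟨C, .refl, fun i hi => ?_⟩
    simp [pathPsi, sum_range_succ] at h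
    by_cases h0 : 0 < C 0
    · exact ⟨0, by omega, h0, by omega, by omega⟩
    · exact ⟨1, by omega, by omega, by omega, by omega⟩
  | (n + 3), C, h => by
    have ih := solv_of_le_sum n
    by_cases h1 : pathPsi n ≤ ∑ i ∈ range n, C i
    · exact solv_of_first ih C h h1
    have hrs : ∑ i ∈ range (n + 3), (C ∘ rv (n + 3)) i = ∑ i ∈ range (n + 3), C i := by
      rw [← sum_range_reflect C (n + 3)]
      exact sum_congr rfl fun i hi => by simp [rv, mem_range.1 hi]
    by_cases h2 : pathPsi n ≤ ∑ i ∈ range n, (C ∘ rv (n + 3)) i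
    · exact solv_of_rv (solv_of_first ih _ (by rw [hrs]; exact h) h2)
    match n with
    | 0 => simp [pathPsi] at h1
    | 1 =>
      -- All the pebbles are on the two inner vertices of `P_4`.
      have e0 : C 0 = 0 := by simpa [pathPsi] using h1
      have e3 : C 3 = 0 := by simpa [pathPsi, rv] using h2
      have hs : 5 ≤ C 1 + C 2 := by
        simpa [pathPsi, sum_range_succ, e0, e3] using h
      have fin : ∀ D : ℕ → ℕ, 0 < D 1 → 0 < D 2 → ∀ i < 4, Dom 4 D i := by
        intro D d1 d2 i hi
        by_cases hi2 : i < 2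
        · exact ⟨1, by omega, d1, by omega, by omega⟩
        · exact ⟨2, by omega, d2, by omega, by omega⟩
      by_cases c1 : 3 ≤ C 1
      · exact ⟨_, reach_move (i := 1) (j := 2) (by omega) (by omega) (by omega) (by omega),
          fin _ (by simp; omega) (by simp)⟩
      · exact ⟨_, reach_move (i := 2) (j := 1) (by omega) (by omega) (by omega) (by omega),
          fin _ (by simp) (by simp; omega)⟩
    | 2 =>
      -- All the pebbles are on the middle vertex of `P_5`.
      have e0 : C 0 = 0 ∧ C 1 = 0 := by simpa [pathPsi, sum_range_succ] using h1
      have e3 : C 4 = 0 ∧ C 3 = 0 := by simpa [pathPsi, rv, sum_range_succ] using h2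
      have hs : 9 ≤ C 2 := by
        simpa [pathPsi, sum_range_succ, e0, e3] using h
      refine ⟨_, (reach_move (i := 2) (j := 1) (by omega) (by omega) (by omega) (by omega)).trans
        (reach_move (i := 2) (j := 3) (by omega) (by omega) (by omega) (by simp; omega)), ?_⟩
      intro i hi
      by_cases hi2 : i < 2
      · exact ⟨1, by omega, by simp, by omega, by omega⟩
      · exact ⟨3, by omega, by simp, by omega, by omega⟩
    | (k + 3) =>
      exfalso
      have hle := pathPsi_le (k + 3)
      have e : pathPsi (k + 3 + 3) = 2 ^ (k + 3 + 1) + pathPsi (k + 3) := rfl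
      have s2 : C (k + 5) + C (k + 4) + C (k + 3) ≤
          ∑ i ∈ range (k + 3), (C ∘ rv (k + 3 + 3)) i := by
        rw [sum_range_succ', sum_range_succ', sum_range_succ']
        simp [rv]
        omega
      rw [sum_range_succ, sum_range_succ, sum_range_succ] at h
      have a1 : k + 3 + 1 = k + 4 := rfl
      have a2 : k + 3 + 2 = k + 5 := rfl
      rw [a1, a2] at h
      rw [a1] at hle e
      omega

/-! ### Lower bound -/

/-- Allowing vertex `n` to help dominate `0, …, n - 1` is what lets the induction go through: the
pebbles at `n + 1, n + 2, n + 3` that dominate vertex `n + 2` are disjoint from those counted for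
the first `n` vertices. -/
lemma pathPsi_le_weight : ∀ (n : ℕ) (C : ℕ → ℕ), (∀ i < n, Dom (n + 1) C i) →
    pathPsi n ≤ ∑ i ∈ range (n + 1), C i * 2 ^ i
  | 0, C, _ => by simp [pathPsi]
  | 1, C, h => by
    obtain ⟨j, hj, h0, -, -⟩ := h 0 (by omega)
    simp only [pathPsi, sum_range_succ, sum_range_zero]
    interval_cases j <;> omega
  | 2, C, h => by
    obtain ⟨j, hj, h0, -, -⟩ := h 0 (by omega)
    simp only [pathPsi, sum_range_succ, sum_range_zero]
    interval_cases j <;> omega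
  | (n + 3), C, h => by
    have ih := pathPsi_le_weight n C (fun i hi => by
      obtain ⟨j, hj, h0, h1, h2⟩ := h i (by omega)
      exact ⟨j, by omega, h0, h1, h2⟩)
    obtain ⟨j, hj, h0, h1, h2⟩ := h (n + 2) (by omega)
    have hw : 2 ^ (n + 1) ≤ C j * 2 ^ j :=
      (Nat.pow_le_pow_right (by norm_num) (by omega)).trans (Nat.le_mul_of_pos_left _ h0)
    rw [sum_range_succ, sum_range_succ, sum_range_succ]
    have hj3 : j = n + 1 ∨ j = n + 2 ∨ j = n + 3 := by omega
    simp only [pathPsi]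
    rcases hj3 with rfl | rfl | rfl <;> omega

lemma weight_move {n : ℕ} {C C' : Fin n → ℕ} (h : PebblingMove (SimpleGraph.pathGraph n) C C') :
    ∑ i, C' i * 2 ^ (i : ℕ) ≤ ∑ i, C i * 2 ^ (i : ℕ) := by
  obtain ⟨u, v, hadj, hu, rfl⟩ := h
  have hne : u ≠ v := hadj.ne
  rw [SimpleGraph.pathGraph_adj] at hadj
  have hv : v ∈ (univ : Finset (Fin n)).erase u := by simp [hne.symm]
  rw [← add_sum_erase univ _ (mem_univ u), ← add_sum_erase _ _ hv,
    ← add_sum_erase univ (fun i => C i * 2 ^ (i : ℕ)) (mem_univ u), ← add_sum_erase _ _ hv]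
  have hrest : ∑ x ∈ ((univ : Finset (Fin n)).erase u).erase v,
      Function.update (Function.update C u (C u - 2)) v (C v + 1) x * 2 ^ (x : ℕ) =
      ∑ x ∈ ((univ : Finset (Fin n)).erase u).erase v, C x * 2 ^ (x : ℕ) :=
    sum_congr rfl fun x hx => by
      simp only [mem_erase] at hx
      simp [hx.1, hx.2.1]
  rw [hrest]
  simp only [Function.update_self, Function.update_of_ne hne]
  have hp : 2 ^ (v : ℕ) ≤ 2 * 2 ^ (u : ℕ) := by
    rw [← pow_succ']
    exact Nat.pow_le_pow_right (by norm_num) (by omega)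
  obtain ⟨c, hc⟩ := Nat.exists_eq_add_of_le hu
  rw [hc, Nat.add_sub_cancel_left]
  nlinarith

lemma weight_reach {n : ℕ} {C C' : Fin n → ℕ}
    (h : Relation.ReflTransGen (PebblingMove (SimpleGraph.pathGraph n)) C C') :
    ∑ i, C' i * 2 ^ (i : ℕ) ≤ ∑ i, C i * 2 ^ (i : ℕ) := by
  induction h with
  | refl => exact le_rfl
  | tail _ h ih => exact (weight_move h).trans ih

/-! ### Transfer to `SimpleGraph.pathGraph` -/

/-- Extension of a configuration on `Fin n` by zero. -/
def ext0 {n : ℕ} (C : Fin n → ℕ) (i : ℕ) : ℕ := if h : i < n then C ⟨i, h⟩ else 0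

lemma ext0_val {n : ℕ} (C : Fin n → ℕ) (i : Fin n) : ext0 C i = C i := by simp [ext0]

lemma move_restrict {n : ℕ} {C C' : ℕ → ℕ} (h : Mv n C C') :
    PebblingMove (SimpleGraph.pathGraph n) (fun i => C i) (fun i => C' i) := by
  obtain ⟨B, i, j, hi, hj, hij, rfl, rfl⟩ := h
  refine ⟨⟨i, hi⟩, ⟨j, hj⟩, ?_, by simp, ?_⟩
  · rw [SimpleGraph.pathGraph_adj]
    dsimp only
    omega
  · have hne : i ≠ j := by omega
    funext k
    obtain ⟨k, hk⟩ := k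
    by_cases h1 : k = j
    · subst h1; simp [hne.symm]
    · by_cases h2 : k = i
      · subst h2; simp [hne]
      · simp [h1, h2]

lemma solvable_of_le {n : ℕ} (C : Fin n → ℕ) (h : pathPsi n ≤ ∑ v, C v) :
    DomCoverSolvable (SimpleGraph.pathGraph n) C := by
  have hs : ∑ i ∈ range n, ext0 C i = ∑ v, C v := by
    rw [← Fin.sum_univ_eq_sum_range]; simp [ext0_val]
  obtain ⟨D, hD, hd⟩ := solv_of_le_sum n (ext0 C) (by rw [hs]; exact h)
  refine ⟨fun i => D i, ?_, ?_⟩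
  · have := Relation.ReflTransGen.lift (fun (X : ℕ → ℕ) (i : Fin n) => X i)
      (fun _ _ hm => move_restrict hm) _ _ hD
    simpa [Function.onFun, ext0_val] using this
  · intro v
    obtain ⟨j, hj, h0, h1, h2⟩ := hd v v.2
    by_cases hv : j = v
    · left
      subst hv
      exact h0
    · right
      refine ⟨⟨j, hj⟩, h0, ?_⟩
      rw [SimpleGraph.pathGraph_adj]
      dsimp only
      omega

lemma isLeast_pathPsi {n : ℕ} (hn : 1 ≤ n) :
    IsLeast (DomCoverSet (SimpleGraph.pathGraph n)) (pathPsi n) := by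
  refine ⟨fun C hC => solvable_of_le C hC, fun k hk => ?_⟩
  by_contra! hlt
  obtain ⟨D, hD, hdom⟩ := hk (Pi.single ⟨0, hn⟩ (pathPsi n - 1)) (by
    rw [Fintype.sum_eq_single ⟨0, hn⟩ (fun x hx => by simp [hx]), Pi.single_eq_same]
    omega)
  have hw := weight_reach hD
  have hw0 : ∑ i : Fin n, (Pi.single ⟨0, hn⟩ (pathPsi n - 1) : Fin n → ℕ) i * 2 ^ (i : ℕ)
      = pathPsi n - 1 := by
    rw [Finset.sum_eq_single ⟨0, hn⟩]
    · simp
    · intro b _ hb; simp [hb]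
    · simp
  have hl := pathPsi_le_weight n (ext0 D) (by
    intro i hi
    rcases hdom ⟨i, hi⟩ with h | ⟨u, hu, hadj⟩
    · exact ⟨i, by omega, by simpa [ext0, hi] using h, by omega, by omega⟩
    · rw [SimpleGraph.pathGraph_adj] at hadj
      dsimp only at hadj
      exact ⟨u, by omega, by rw [ext0_val]; exact hu, by omega, by omega⟩)
  rw [sum_range_succ, ← Fin.sum_univ_eq_sum_range (fun i => ext0 D i * 2 ^ i)] at hl
  have hz : ext0 D n = 0 := by simp [ext0]
  simp only [ext0_val, hz, zero_mul, add_zero] at hl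
  omega

lemma pathPsi_eq (α : ℕ) (hα : α < 3) (k : ℕ) :
    (∑ i ∈ range (k + 1), 2 ^ (α + 3 * k - 3 * i)) + α / 2 = pathPsi (α + 3 * k + 2) := by
  induction k with
  | zero => interval_cases α <;> simp [pathPsi]
  | succ k ih =>
    have e : α + 3 * (k + 1) + 2 = (α + 3 * k + 2) + 3 := by ring
    rw [e, pathPsi, ← ih, sum_range_succ']
    have : ∀ i, α + 3 * (k + 1) - 3 * (i + 1) = α + 3 * k - 3 * i := fun i => by omega
    simp only [this]
    have e2 : α + 3 * (k + 1) - 3 * 0 = α + 3 * k + 2 + 1 := by omega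
    rw [e2]
    ring

lemma geom_closed (α k : ℕ) :
    ((∑ i ∈ range (k + 1), 2 ^ (α + 3 * k - 3 * i) : ℕ) : ℝ) =
      2 ^ (α + 3 * k + 3) * (1 - (8 : ℝ) ^ (-(k + 1 : ℤ))) / 7 := by
  have h8 : (8 : ℝ) ^ (-(k + 1 : ℤ)) = ((8 : ℝ) ^ (k + 1))⁻¹ := by
    rw [zpow_neg]; norm_cast
  have h3 : (2 : ℝ) ^ (α + 3 * k + 3) = 2 ^ α * 8 ^ (k + 1) := by
    rw [show α + 3 * k + 3 = α + 3 * (k + 1) by ring, pow_add, pow_mul]; norm_num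
  have main : ((∑ i ∈ range (k + 1), 2 ^ (α + 3 * k - 3 * i) : ℕ) : ℝ) =
      2 ^ α * (8 ^ (k + 1) - 1) / 7 := by
    rw [← sum_range_reflect]
    have : ∀ i ∈ range (k + 1), 2 ^ (α + 3 * k - 3 * (k + 1 - 1 - i)) = 2 ^ α * 8 ^ i := by
      intro i hi
      rw [mem_range] at hi
      rw [show α + 3 * k - 3 * (k + 1 - 1 - i) = α + 3 * i by omega, pow_add, pow_mul]
      norm_num
    rw [sum_congr rfl this, ← mul_sum]
    push_cast
    rw [geom_sum_eq (by norm_num)]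
    ring
  rw [main, h8, h3]
  field_simp

/-- For `n ≥ 3`, writing `n - 2 = α_n + 3 k_n` with `α_n ∈ {0,1,2}`, the
domination cover pebbling number of the path `P_n` equals
`(Σ_{i=0}^{k_n} 2^(n-2-3i)) + ⌊α_n/2⌋ = 2^(n+1) (1 - 8^(-(k_n+1)))/7 + ⌊α_n/2⌋`. -/
theorem psi_pathGraph (n : ℕ) (hn : 3 ≤ n) (α k : ℕ) (hα : α < 3)
    (hdecomp : n - 2 = α + 3 * k) :
    IsLeast (DomCoverSet (SimpleGraph.pathGraph n))
      ((∑ i ∈ Finset.range (k + 1), 2 ^ (n - 2 - 3 * i)) + α / 2) ∧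
    (((∑ i ∈ Finset.range (k + 1), 2 ^ (n - 2 - 3 * i)) + α / 2 : ℕ) : ℝ) =
      2 ^ (n + 1) * (1 - (8 : ℝ) ^ (-(k + 1 : ℤ))) / 7 + (α / 2 : ℕ) := by
  obtain rfl : n = α + 3 * k + 2 := by omega
  rw [Nat.add_sub_cancel]
  constructor
  · rw [pathPsi_eq α hα k]
    exact isLeast_pathPsi (by omega)
  · rw [Nat.cast_add, geom_closed]
end

section
/- For every n ≥ 3, the value of ψ(C_n) is attained when all pebbles are placed on a single vertex: there exists a vertex v of the cycle C_n such that the configuration placing ψ(C_n) − 1 pebbles on v and none elsewhere is not domination-cover-solvable. -/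
namespace DomCover

open Finset

/-! ### Pebbling towards a set of vertices -/

section General

variable {V : Type*} [DecidableEq V] {G : SimpleGraph V}

/-- `C` can be pebbled to a configuration dominating every vertex of `I`. -/
def Sol (G : SimpleGraph V) (C : V → ℕ) (I : Set V) : Prop :=
  ∃ C' : V → ℕ, Relation.ReflTransGen (PebblingMove G) C C' ∧
    ∀ v ∈ I, 0 < C' v ∨ ∃ u, 0 < C' u ∧ G.Adj u v

lemma move_add {C C' : V → ℕ} (D : V → ℕ) (h : PebblingMove G C C') :
    PebblingMove G (C + D) (C' + D) := by
  obtain ⟨u, v, huv, h2, rfl⟩ := h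
  refine ⟨u, v, huv, by simp only [Pi.add_apply]; omega, ?_⟩
  have hne : u ≠ v := huv.ne
  funext z
  by_cases hz : z = v
  · subst hz
    simp; omega
  · by_cases hz' : z = u
    · subst hz'
      simp [hz]; omega
    · simp [hz, hz']

lemma reach_add {C C' : V → ℕ} (D : V → ℕ) (h : Relation.ReflTransGen (PebblingMove G) C C') :
    Relation.ReflTransGen (PebblingMove G) (C + D) (C' + D) :=
  h.lift (· + D) fun _ _ hm => move_add D hm

lemma Sol.add {C D : V → ℕ} {I J : Set V} (hC : Sol G C I) (hD : Sol G D J) :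
    Sol G (C + D) (I ∪ J) := by
  obtain ⟨C', hC, hI⟩ := hC
  obtain ⟨D', hD, hJ⟩ := hD
  refine ⟨C' + D', (reach_add D hC).trans ?_, ?_⟩
  · have := reach_add C' hD
    rwa [add_comm D, add_comm D'] at this
  · rintro v (hv | hv)
    · rcases hI v hv with h | ⟨u, h, hu⟩
      · exact Or.inl (by simp only [Pi.add_apply]; omega)
      · exact Or.inr ⟨u, by simp only [Pi.add_apply]; omega, hu⟩
    · rcases hJ v hv with h | ⟨u, h, hu⟩
      · exact Or.inl (by simp only [Pi.add_apply]; omega)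
      · exact Or.inr ⟨u, by simp only [Pi.add_apply]; omega, hu⟩

lemma Sol.mono {C : V → ℕ} {I J : Set V} (h : Sol G C I) (hJ : J ⊆ I) : Sol G C J := by
  obtain ⟨C', h1, h2⟩ := h
  exact ⟨C', h1, fun v hv => h2 v (hJ hv)⟩

lemma sol_empty (C : V → ℕ) : Sol G C ∅ := ⟨C, .refl, by simp⟩

lemma Sol.add_right {C : V → ℕ} {I : Set V} (h : Sol G C I) (D : V → ℕ) : Sol G (C + D) I :=
  (h.add (sol_empty D)).mono (by simp)

lemma Sol.le {C D : V → ℕ} {I : Set V} (h : Sol G C I) (hD : C ≤ D) : Sol G D I := by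
  have := h.add_right (D - C)
  rwa [add_tsub_cancel_of_le hD] at this

lemma Sol.of_reach {C D : V → ℕ} {I : Set V} (h : Sol G D I)
    (hr : Relation.ReflTransGen (PebblingMove G) C D) : Sol G C I := by
  obtain ⟨C', h1, h2⟩ := h
  exact ⟨C', hr.trans h1, h2⟩

lemma reach_single {u v : V} (huv : G.Adj u v) (m : ℕ) :
    Relation.ReflTransGen (PebblingMove G) (Pi.single u (2 * m)) (Pi.single v m) := by
  induction m with
  | zero => simp only [mul_zero, Pi.single_zero]; exact .refl
  | succ m ih =>
    have hne : u ≠ v := huv.ne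
    have h1 : PebblingMove G (Pi.single u 2 : V → ℕ) (Pi.single v 1) := by
      refine ⟨u, v, huv, by simp, ?_⟩
      funext z
      by_cases hz : z = v
      · subst hz; simp [hne.symm]
      · by_cases hz' : z = u
        · subst hz'; simp [hz]
        · simp [hz, hz']
    have h2 := reach_add (Pi.single u 2) ih
    have h3 := move_add (Pi.single v m) h1
    rw [← Pi.single_add, show 2 * m + 2 = 2 * (m + 1) by ring,
      add_comm (Pi.single v m : V → ℕ)] at h2
    rw [← Pi.single_add, add_comm 1 m] at h3
    exact h2.tail h3

/-- `2 * m` pebbles may be moved from `u` to an adjacent `v`, where `m` of them arrive. -/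
lemma Sol.pull {u v : V} (huv : G.Adj u v) {m : ℕ} {D : V → ℕ} {I : Set V}
    (h : Sol G (Pi.single v m + D) I) : Sol G (Pi.single u (2 * m) + D) I :=
  h.of_reach (reach_add D (reach_single huv m))

lemma sol_single (v : V) {x : ℕ} (hx : 0 < x) :
    Sol G (Pi.single v x) {u | u = v ∨ G.Adj v u} := by
  refine ⟨_, .refl, ?_⟩
  rintro u (rfl | hu)
  · exact Or.inl (by simpa using hx)
  · exact Or.inr ⟨v, by simpa using hx, hu⟩

end General

/-! ### The numerical functions -/

/-- Cost of dominating a path on `3 * s` vertices from one of its ends: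
`2 + 2 ^ 4 + ⋯ + 2 ^ (3 * s - 2)`. -/
def g : ℕ → ℕ
  | 0 => 0
  | s + 1 => 8 * g s + 2

/-- Cost, in pebbles at position `0` of a ray, of dominating the positions `1, …, L`, when
position `1` is exempt in case `L % 3 = 1`. -/
def Q (L : ℕ) : ℕ := 2 ^ ((L + 1) % 3) * g ((L + 1) / 3)

/-- Cost of dominating a path on `L` vertices from one of its ends. -/
def H : ℕ → ℕ
  | 0 => 0
  | L + 1 => Q L + if L % 3 = 2 then 0 else 1

lemma Q0 (t : ℕ) : Q (3 * t) = 2 * g t := by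
  unfold Q; rw [show (3 * t + 1) % 3 = 1 by omega, show (3 * t + 1) / 3 = t by omega]; rfl
lemma Q1 (t : ℕ) : Q (3 * t + 1) = 4 * g t := by
  unfold Q; rw [show (3 * t + 1 + 1) % 3 = 2 by omega, show (3 * t + 1 + 1) / 3 = t by omega]; rfl
lemma Q2 (t : ℕ) : Q (3 * t + 2) = 8 * g t + 2 := by
  unfold Q
  rw [show (3 * t + 2 + 1) % 3 = 0 by omega, show (3 * t + 2 + 1) / 3 = t + 1 by omega]
  simp [g]

lemma three_cases (L : ℕ) : ∃ t, L = 3 * t ∨ L = 3 * t + 1 ∨ L = 3 * t + 2 :=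
  ⟨L / 3, by omega⟩

lemma Q_succ (L : ℕ) : Q (L + 1) = 2 * Q L + if L % 3 = 1 then 2 else 0 := by
  obtain ⟨t, rfl | rfl | rfl⟩ := three_cases L
  · rw [Q0, Q1, if_neg (by omega)]; omega
  · rw [Q1, Q2, if_pos (by omega)]; omega
  · rw [Q2, show 3 * t + 2 + 1 = 3 * (t + 1) by ring, Q0, if_neg (by omega)]; simp [g]

lemma Q_mono : Monotone Q := monotone_nat_of_le_succ fun L => by rw [Q_succ]; omega

lemma Q_zero : Q 0 = 0 := rfl
lemma Q_one : Q 1 = 0 := rfl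
lemma Q_two : Q 2 = 2 := rfl

lemma two_le_Q {L : ℕ} (hL : 2 ≤ L) : 2 ≤ Q L := Q_two ▸ Q_mono hL

lemma H_succ_le (L : ℕ) : H (L + 1) ≤ Q L + 1 := by
  simp only [H]; split_ifs <;> omega

lemma Q_le_H_succ (L : ℕ) : Q L ≤ H (L + 1) := by
  simp only [H]; omega

lemma H_le_Q_add_one (L : ℕ) : H L ≤ Q L + 1 := by
  cases L with
  | zero => simp [H]
  | succ L => have := H_succ_le L; have := Q_mono (Nat.le_succ L); simp at this; omega

lemma H_le_Q {L : ℕ} (hL : 2 ≤ L) : H L ≤ Q L := by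
  obtain ⟨M, rfl⟩ : ∃ M, L = M + 2 := ⟨L - 2, by omega⟩
  have h1 : H (M + 2) ≤ Q (M + 1) + 1 := H_succ_le (M + 1)
  have h2 : Q (M + 2) = _ := Q_succ (M + 1)
  rcases Nat.eq_zero_or_pos M with rfl | hM
  · decide
  · have := two_le_Q (L := M + 1) (by omega)
    omega

lemma Q_add_le {A B : ℕ} (hA : 1 ≤ A) (hB : 1 ≤ B) : Q A + Q B + 1 ≤ Q (A + B) := by
  wlog hAB : A ≤ B generalizing A B
  · have := this hB hA (by omega)
    rw [add_comm B A] at this; omega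
  have h1 := Q_mono hAB
  rcases Nat.lt_or_ge B 2 with hB2 | hB2
  · obtain rfl : B = 1 := by omega
    obtain rfl : A = 1 := by omega
    decide
  have h2 := two_le_Q hB2
  rcases Nat.lt_or_ge A 2 with hA2 | hA2
  · obtain rfl : A = 1 := by omega
    have := Q_succ B
    rw [add_comm 1 B, Q_one]; omega
  · have h3 := Q_succ B
    have h4 := Q_succ (B + 1)
    have h5 : Q (B + 1 + 1) ≤ Q (A + B) := Q_mono (by omega)
    omega

lemma H_three (s : ℕ) : H (3 * s) = g s := by
  cases s with
  | zero => rfl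
  | succ s =>
    rw [show 3 * (s + 1) = 3 * s + 2 + 1 by ring]
    simp only [H]
    rw [Q2, if_pos (by omega)]; simp [g]

/-! ### Dominating paths -/

section Paths

set_option linter.unusedSectionVars false

variable {V : Type*} [DecidableEq V] {G : SimpleGraph V}

/-- The configuration with `a z` pebbles at the vertex `w z` of a bi-infinite walk, for the `L`
integers `z = s, …, s + L - 1`. -/
def cfg (w : ℤ → V) (a : ℤ → ℕ) (s : ℤ) (L : ℕ) : V → ℕ :=
  ∑ i ∈ range L, Pi.single (w (s + i)) (a (s + i))

/-- The number of pebbles in `cfg w a s L`. -/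
def arc (a : ℤ → ℕ) (s : ℤ) (L : ℕ) : ℕ := ∑ i ∈ range L, a (s + i)

/-- The vertices `w s, …, w (s + L - 1)`. -/
def seg (w : ℤ → V) (s : ℤ) (L : ℕ) : Set V := {v | ∃ i : ℤ, s ≤ i ∧ i < s + L ∧ v = w i}

/-- `w` is a bi-infinite walk in `G`. -/
def IsWalk (G : SimpleGraph V) (w : ℤ → V) : Prop := ∀ z, G.Adj (w z) (w (z + 1))

lemma IsWalk.neg {w : ℤ → V} (hw : IsWalk G w) : IsWalk G (fun z => w (-z)) := fun z => by
  have := (hw (-z - 1)).symm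
  rwa [show -z - 1 + 1 = -z by ring, show -z - 1 = -(z + 1) by ring] at this

lemma cfg_add (w : ℤ → V) (a : ℤ → ℕ) (s : ℤ) (L M : ℕ) :
    cfg w a s (L + M) = cfg w a s L + cfg w a (s + L) M := by
  unfold cfg
  rw [sum_range_add]
  simp only [Nat.cast_add, add_assoc]

lemma arc_add (a : ℤ → ℕ) (s : ℤ) (L M : ℕ) :
    arc a s (L + M) = arc a s L + arc a (s + L) M := by
  unfold arc
  rw [sum_range_add]
  simp only [Nat.cast_add, add_assoc]

lemma cfg_one (w : ℤ → V) (a : ℤ → ℕ) (s : ℤ) : cfg w a s 1 = Pi.single (w s) (a s) := by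
  simp [cfg]

lemma arc_one (a : ℤ → ℕ) (s : ℤ) : arc a s 1 = a s := by
  simp [arc]

lemma arc_zero (a : ℤ → ℕ) (s : ℤ) : arc a s 0 = 0 := rfl

lemma cfg_succ (w : ℤ → V) (a : ℤ → ℕ) (s : ℤ) (L : ℕ) :
    cfg w a s (L + 1) = Pi.single (w s) (a s) + cfg w a (s + 1) L := by
  rw [add_comm L 1, cfg_add, cfg_one]; simp

lemma arc_succ (a : ℤ → ℕ) (s : ℤ) (L : ℕ) : arc a s (L + 1) = a s + arc a (s + 1) L := by
  rw [add_comm L 1, arc_add, arc_one]; simp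

lemma cfg_neg (w : ℤ → V) (a : ℤ → ℕ) (s : ℤ) (L : ℕ) :
    cfg (fun z => w (-z)) (fun z => a (-z)) (1 - s - L) L = cfg w a s L := by
  unfold cfg
  rw [← sum_range_reflect]
  refine sum_congr rfl fun i hi => ?_
  have : i < L := mem_range.1 hi
  have e : -(1 - s - (L : ℤ) + ((L - 1 - i : ℕ) : ℤ)) = s + i := by omega
  simp only [e]

lemma arc_neg (a : ℤ → ℕ) (s : ℤ) (L : ℕ) :
    arc (fun z => a (-z)) (1 - s - L) L = arc a s L := by
  unfold arc
  rw [← sum_range_reflect]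
  refine sum_congr rfl fun i hi => ?_
  have : i < L := mem_range.1 hi
  have e : -(1 - s - (L : ℤ) + ((L - 1 - i : ℕ) : ℤ)) = s + i := by omega
  simp only [e]

lemma seg_neg (w : ℤ → V) (s : ℤ) (L : ℕ) :
    seg (fun z => w (-z)) (1 - s - L) L = seg w s L := by
  ext v
  constructor
  · rintro ⟨i, h1, h2, rfl⟩
    exact ⟨-i, by omega, by omega, rfl⟩
  · rintro ⟨i, h1, h2, rfl⟩
    exact ⟨-i, by omega, by omega, by simp⟩

lemma cfg_congr (w : ℤ → V) {a b : ℤ → ℕ} {s : ℤ} (L : ℕ) (hab : ∀ z, s ≤ z → a z = b z) :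
    cfg w a s L = cfg w b s L :=
  sum_congr rfl fun i _ => by rw [hab _ (by omega)]

lemma arc_congr {a b : ℤ → ℕ} {s : ℤ} (L : ℕ) (hab : ∀ z, s ≤ z → a z = b z) :
    arc a s L = arc b s L :=
  sum_congr rfl fun i _ => by rw [hab _ (by omega)]

lemma Sol.single_mono {v : V} {x y : ℕ} {D : V → ℕ} {I : Set V}
    (hs : Sol G (Pi.single v x + D) I) (hxy : x ≤ y) : Sol G (Pi.single v y + D) I := by
  obtain ⟨d, rfl⟩ := Nat.exists_eq_add_of_le hxy
  have := hs.add_right (Pi.single v d)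
  rwa [add_right_comm, ← Pi.single_add] at this

/-- Every placement of `H L` pebbles on a path with `L` vertices can be turned, inside the path,
into one dominating the path. -/
def PathSol (G : SimpleGraph V) (L : ℕ) : Prop :=
  ∀ w : ℤ → V, IsWalk G w → ∀ (a : ℤ → ℕ) (s : ℤ), H L ≤ arc a s L →
    Sol G (cfg w a s L) (seg w s L)

lemma PathSol.extra {L : ℕ} (hP : PathSol G L) {w : ℤ → V} (hw : IsWalk G w) (a : ℤ → ℕ) (s : ℤ)
    (x : ℕ) (hx : H L ≤ x + arc a s L) :
    Sol G (Pi.single (w s) x + cfg w a s L) (seg w s L) := by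
  cases L with
  | zero => exact (sol_empty _).mono (by rintro v ⟨i, h1, h2, -⟩; simp at h2; omega)
  | succ L =>
    have hc : ∀ z, s + 1 ≤ z → Function.update a s (x + a s) z = a z := fun z hz => by
      rw [Function.update_of_ne (by omega)]
    have := hP w hw (Function.update a s (x + a s)) s (by
      rw [arc_succ, arc_congr L hc]; rw [arc_succ] at hx; simp; omega)
    rw [cfg_succ, cfg_congr w L hc] at this
    rwa [cfg_succ, ← add_assoc, ← Pi.single_add, ← Function.update_self s (x + a s) a]

lemma dem0 {t : ℕ} (hP : PathSol G (3 * t)) {w : ℤ → V} (hw : IsWalk G w) (a : ℤ → ℕ) (s : ℤ)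
    (x : ℕ) (hx : 2 * g t ≤ arc a (s + 1) (3 * t) + x) :
    Sol G (Pi.single (w s) x + cfg w a (s + 1) (3 * t)) (seg w (s + 1) (3 * t)) := by
  have h1 := hP.extra hw a (s + 1) (g t - arc a (s + 1) (3 * t)) (by rw [H_three]; omega)
  exact (h1.pull (hw s)).single_mono (by omega)

lemma dem1 {t : ℕ} (hP : PathSol G (3 * t)) {w : ℤ → V} (hw : IsWalk G w) (a : ℤ → ℕ) (s : ℤ)
    (x : ℕ) (hx : 4 * g t ≤ arc a (s + 1) (3 * t + 1) + x) :
    Sol G (Pi.single (w s) x + cfg w a (s + 1) (3 * t + 1)) (seg w (s + 2) (3 * t)) := by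
  rw [arc_succ] at hx
  rw [cfg_succ]
  have h1 := dem0 hP hw a (s + 1) (2 * g t - arc a (s + 1 + 1) (3 * t)) (by omega)
  have h2 := h1.single_mono (y := 2 * g t - arc a (s + 1 + 1) (3 * t) - a (s + 1) + a (s + 1))
    (by omega)
  rw [Pi.single_add, add_assoc] at h2
  rw [show s + 1 + 1 = s + 2 by ring] at *
  exact (h2.pull (hw s)).single_mono (by omega)

lemma dem2 {t : ℕ} (hP : PathSol G (3 * (t + 1))) {w : ℤ → V} (hw : IsWalk G w) (a : ℤ → ℕ)
    (s : ℤ) (x : ℕ) (hx : 8 * g t + 2 ≤ arc a (s + 1) (3 * t + 2) + x) :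
    Sol G (Pi.single (w s) x + cfg w a (s + 1) (3 * t + 2)) (seg w s (3 * (t + 1))) := by
  have hc : ∀ z, s + 1 ≤ z → Function.update a s 0 z = a z := fun z hz => by
    rw [Function.update_of_ne (by omega)]
  have e : 3 * (t + 1) = 3 * t + 2 + 1 := by ring
  have h1 := hP.extra hw (Function.update a s 0) s x (by
    rw [H_three, e, arc_succ, arc_congr _ hc]; simp [g]; omega)
  rw [e, cfg_succ, cfg_congr w _ hc] at h1
  rw [e]
  simpa using h1

/-- `L` consecutive vertices next to `w s` carrying `S` pebbles are dominated with the help of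
`Q L - S` pebbles at `w s`. If `L % 3 = 1` the vertex next to `w s` is left out, while
if `L % 3 = 2` the vertex `w s` is dominated as well. -/
lemma demand {L : ℕ} (hP : PathSol G (3 * ((L + 1) / 3))) {w : ℤ → V} (hw : IsWalk G w)
    (a : ℤ → ℕ) (s : ℤ) (x : ℕ) (hx : Q L ≤ arc a (s + 1) L + x) :
    Sol G (Pi.single (w s) x + cfg w a (s + 1) L)
      (seg w (s + ((L + 1) % 3 : ℕ)) (3 * ((L + 1) / 3))) := by
  obtain ⟨t, rfl | rfl | rfl⟩ := three_cases L
  · rw [Q0] at hx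
    rw [show (3 * t + 1) / 3 = t by omega] at *
    rw [show (3 * t + 1) % 3 = 1 by omega]
    exact dem0 hP hw a s x hx
  · rw [Q1] at hx
    rw [show (3 * t + 1 + 1) / 3 = t by omega] at *
    rw [show (3 * t + 1 + 1) % 3 = 2 by omega]
    exact dem1 hP hw a s x hx
  · rw [Q2] at hx
    rw [show (3 * t + 2 + 1) / 3 = t + 1 by omega] at *
    rw [show (3 * t + 2 + 1) % 3 = 0 by omega]
    simpa using dem2 hP hw a s x hx

/-- Number of pebbles that must stay at the centre after both sides of lengths `A` and `B` have
been served: none if one side dominates the centre and the other leaves no neighbour of the centre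
undominated. -/
def eps (A B : ℕ) : ℕ := if (A % 3 = 2 ∧ B % 3 ≠ 1) ∨ (B % 3 = 2 ∧ A % 3 ≠ 1) then 0 else 1

/-- A path is dominated from its vertex `w s`, which has `A` vertices on one side and `B` on the
other, if `w s` carries enough pebbles for what both sides lack. -/
lemma center {A B : ℕ} (hA : PathSol G (3 * ((A + 1) / 3))) (hB : PathSol G (3 * ((B + 1) / 3)))
    {w : ℤ → V} (hw : IsWalk G w) (a : ℤ → ℕ) (s : ℤ)
    (hx : (Q A - arc a (s - A) A) + (Q B - arc a (s + 1) B) + eps A B ≤ a s) :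
    Sol G (cfg w a (s - A) (A + (B + 1))) (seg w (s - A) (A + (B + 1))) := by
  have hl := demand hA hw.neg (fun z => a (-z)) (-s) (Q A - arc a (s - A) A) (by
    have := arc_neg a (s - A) A
    rw [show 1 - (s - A) - (A : ℤ) = -s + 1 by ring] at this
    rw [this]; omega)
  have hr := demand hB hw a s (Q B - arc a (s + 1) B) (by omega)
  have e1 := cfg_neg w a (s - A) A
  rw [show 1 - (s - A) - (A : ℤ) = -s + 1 by ring] at e1
  rw [e1, neg_neg] at hl
  have hc : Sol G (Pi.single (w s) (eps A B))
      {u | eps A B = 1 ∧ (u = w s ∨ G.Adj (w s) u)} := by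
    by_cases h0 : eps A B = 1
    · exact (sol_single (w s) (x := eps A B) (by omega)).mono (fun u hu => hu.2)
    · exact (sol_empty _).mono (fun u hu => h0 hu.1)
  have hall := (hl.add hr).add hc
  rw [cfg_add, cfg_succ, show s - A + (A : ℤ) = s by ring]
  have e2 : ∀ x y z : ℕ, ∀ D E : V → ℕ,
      (Pi.single (w s) x + D + (Pi.single (w s) y + E) + Pi.single (w s) z : V → ℕ)
        = Pi.single (w s) (x + y + z) + (D + E) := by
    intro x y z D E; simp only [Pi.single_add]; abel
  rw [e2] at hall
  have := hall.single_mono hx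
  rw [add_left_comm] at this
  refine this.mono ?_
  rintro v ⟨i, h1, h2, rfl⟩
  push_cast at h2
  have hin : (eps A B = 1 ∧ (i = s ∨ i = s + 1 ∨ i = s - 1)) ∨
      (s + ((B + 1) % 3 : ℕ) ≤ i ∧ i < s + ((B + 1) % 3 : ℕ) + (3 * ((B + 1) / 3) : ℕ)) ∨
      (-s + ((A + 1) % 3 : ℕ) ≤ -i ∧ -i < -s + ((A + 1) % 3 : ℕ) + (3 * ((A + 1) / 3) : ℕ)) := by
    unfold eps; split_ifs <;> omega
  rcases hin with ⟨h3, h4⟩ | ⟨h3, h4⟩ | ⟨h3, h4⟩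
  · refine Or.inr ⟨h3, ?_⟩
    rcases h4 with rfl | rfl | rfl
    · exact Or.inl rfl
    · exact Or.inr (hw s)
    · right
      have := (hw (s - 1)).symm
      rwa [show s - 1 + 1 = s by ring] at this
  · exact Or.inl (Or.inr ⟨i, h3, h4, rfl⟩)
  · exact Or.inl (Or.inl ⟨-i, h3, h4, by simp⟩)

lemma pathSol_split {L M : ℕ} (hL : PathSol G L) (hM : PathSol G M) {w : ℤ → V} (hw : IsWalk G w)
    (a : ℤ → ℕ) (s : ℤ) (h1 : H L ≤ arc a s L) (h2 : H M ≤ arc a (s + L) M) :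
    Sol G (cfg w a s (L + M)) (seg w s (L + M)) := by
  rw [cfg_add]
  refine ((hL w hw a s h1).add (hM w hw a _ h2)).mono ?_
  rintro v ⟨i, h3, h4, rfl⟩
  push_cast at h4
  by_cases hi : i < s + L
  · exact Or.inl ⟨i, h3, hi, rfl⟩
  · exact Or.inr ⟨i, by omega, by omega, rfl⟩

lemma pathSol_one : PathSol G 1 := by
  intro w hw a s hs
  rw [arc_one] at hs
  rw [cfg_one]
  refine (sol_single (w s) (x := a s) hs).mono ?_
  rintro v ⟨i, h1, h2, rfl⟩
  obtain rfl : i = s := by push_cast at h2; omega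
  exact Or.inl rfl

/-- Paths with a pebble on an end vertex. -/
lemma end_case {L : ℕ} (ih : ∀ M ≤ L, PathSol G M) {w : ℤ → V} (hw : IsWalk G w)
    (a : ℤ → ℕ) (s : ℤ) (hs : H (L + 1) ≤ arc a s (L + 1)) (h0 : 1 ≤ a s) :
    Sol G (cfg w a s (L + 1)) (seg w s (L + 1)) := by
  by_cases hS : H L ≤ arc a (s + 1) L
  · rw [add_comm L 1]
    exact pathSol_split pathSol_one (ih L le_rfl) hw a s (by rw [arc_one]; exact h0) (by simpa)
  push Not at hS
  rw [arc_succ] at hs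
  by_cases h3 : L % 3 = 2
  · obtain ⟨t, rfl⟩ : ∃ t, L = 3 * t + 2 := ⟨L / 3, by omega⟩
    -- The vertex `w (s + 1)` must keep one pebble; the rest of its pebbles serve the positions
    -- from `s + 3` on.
    have hH : H (3 * t + 2) = 4 * g t + 1 := by
      show Q (3 * t + 1) + _ = _
      rw [Q1, if_neg (by omega)]
    have hH' : H (3 * t + 2 + 1) = 8 * g t + 2 := by
      show Q (3 * t + 2) + _ = _
      rw [Q2, if_pos (by omega)]
    rw [cfg_succ, show 3 * t + 2 = 3 * t + 1 + 1 by ring, cfg_succ]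
    rw [hH, show 3 * t + 2 = 3 * t + 1 + 1 by ring, arc_succ] at hS
    rw [hH', show 3 * t + 2 = 3 * t + 1 + 1 by ring, arc_succ] at hs
    have h1 := dem1 (ih (3 * t) (by omega)) hw a (s + 1)
      (4 * g t - arc a (s + 1 + 1) (3 * t + 1)) (by omega)
    have h2 := (sol_single (G := G) (w (s + 1)) (x := 1) one_pos).add h1
    rw [← add_assoc, ← Pi.single_add] at h2
    have h4 := h2.single_mono
      (y := (1 + (4 * g t - arc a (s + 1 + 1) (3 * t + 1)) - a (s + 1)) + a (s + 1)) (by omega)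
    rw [Pi.single_add, add_assoc] at h4
    refine ((h4.pull (hw s)).single_mono (by omega)).mono ?_
    rintro v ⟨i, h5, h6, rfl⟩
    push_cast at h6
    rcases (by omega : i = s ∨ i = s + 1 ∨ i = s + 1 + 1 ∨ s + 3 ≤ i) with rfl | rfl | rfl | h7
    · exact Or.inl (Or.inr (hw _).symm)
    · exact Or.inl (Or.inl rfl)
    · exact Or.inl (Or.inr (hw _))
    · exact Or.inr ⟨i, by omega, by push_cast; omega, rfl⟩
  · have hH : H (L + 1) = Q L + 1 := by simp [H, h3]
    have hQ := H_le_Q_add_one L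
    have := center (A := 0) (B := L) (ih _ (by omega)) (ih _ (by omega)) hw a s (by
      have : eps 0 L = 1 := by unfold eps; rw [if_neg (by omega)]
      rw [Q_zero, this]; omega)
    simpa using this

/-- The domination cover pebbling number of a path with `L` vertices is at most `H L`. -/
theorem pathSol (L : ℕ) : PathSol G L := by
  induction L using Nat.strong_induction_on with
  | _ L ih =>
  intro w hw a s hs
  rcases Nat.eq_zero_or_pos L with rfl | hL
  · exact (sol_empty _).mono (by rintro v ⟨i, h1, h2, -⟩; simp at h2; omega)
  obtain ⟨L, rfl⟩ : ∃ M, L = M + 1 := ⟨L - 1, by omega⟩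
  by_cases h0 : 1 ≤ a s
  · exact end_case (fun M hM => ih M (by omega)) hw a s hs h0
  by_cases h1 : 1 ≤ a (s + L)
  · have := end_case (L := L) (fun M hM => ih M (by omega)) hw.neg (fun z => a (-z)) (1 - s - (L + 1 : ℕ))
      (by rw [arc_neg]; exact hs)
      (by
        have e : -(1 - s - ((L + 1 : ℕ) : ℤ)) = s + L := by push_cast; ring
        rw [e]; exact h1)
    rwa [cfg_neg, seg_neg] at this
  -- Both ends are empty.
  have hsum : arc a s (L + 1) = arc a s L := by
    rw [arc_add, arc_one]; omega
  have hQL : Q L ≤ arc a s L := by rw [← hsum]; exact (Q_le_H_succ L).trans hs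
  have hL2 : 2 ≤ L := by
    by_contra hlt
    have : H (L + 1) ≤ arc a s L := by rw [← hsum]; exact hs
    rcases (by omega : L = 0 ∨ L = 1) with rfl | rfl
    · rw [arc_zero] at this; revert this; decide
    · have e : H (1 + 1) = 1 := by decide
      rw [arc_one, e] at this; omega
  have hex : ∃ c, 1 ≤ c ∧ Q (c + 1) ≤ arc a s (c + 1) :=
    ⟨L - 1, by omega, by rwa [show L - 1 + 1 = L by omega]⟩
  classical
  -- `c` is the first place at which the pebbles seen so far suffice for one vertex more.
  obtain ⟨c, hc, hmin⟩ : ∃ c, (1 ≤ c ∧ Q (c + 1) ≤ arc a s (c + 1)) ∧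
      ∀ m < c, ¬ (1 ≤ m ∧ Q (m + 1) ≤ arc a s (m + 1)) :=
    ⟨Nat.find hex, Nat.find_spec hex, fun m hm => Nat.find_min hex hm⟩
  have hcL : c ≤ L - 1 := by
    by_contra hlt
    exact hmin (L - 1) (by omega) ⟨by omega, by rwa [show L - 1 + 1 = L by omega]⟩
  have hA : arc a s c ≤ Q c := by
    rcases (by omega : c = 1 ∨ 2 ≤ c) with rfl | h2
    · rw [arc_one]; omega
    · have := hmin (c - 1) (by omega)
      rw [show c - 1 + 1 = c by omega] at this
      omega
  obtain ⟨B, rfl⟩ : ∃ B, L = c + B := ⟨L - c, by omega⟩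
  rw [show c + B + 1 = c + 1 + B by ring] at *
  by_cases hB : H B ≤ arc a (s + (c + 1 : ℕ)) B
  · exact pathSol_split (ih _ (by omega)) (ih _ (by omega)) hw a s
      ((H_le_Q (by omega)).trans hc.2) hB
  · have hQB := H_le_Q_add_one B
    have hQ := Q_add_le hc.1 (by omega : 1 ≤ B)
    have hH : Q (c + B) ≤ H (c + 1 + B) := by
      rw [show c + 1 + B = c + B + 1 by ring]; exact Q_le_H_succ _
    rw [arc_add, arc_add, arc_one] at hs
    have := center (A := c) (B := B) (ih _ (by omega)) (ih _ (by omega)) hw a (s + c) (by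
      have : eps c B ≤ 1 := by unfold eps; split_ifs <;> omega
      rw [show s + c - (c : ℤ) = s by ring]
      push_cast at hs hB
      rw [← add_assoc] at hs hB
      omega)
    rw [show s + c - (c : ℤ) = s by ring] at this
    rwa [show c + 1 + B = c + (B + 1) by ring]

end Paths

/-! ### The upper bound on cycles -/

section Cycle

variable {n : ℕ}

lemma cycle_adj (hn : 3 ≤ n) (u v : Fin n) : (SimpleGraph.cycleGraph n).Adj u v ↔
    (u.val + 1) % n = v.val ∨ (v.val + 1) % n = u.val := by
  rw [SimpleGraph.cycleGraph_adj', Fin.val_sub, Fin.val_sub]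
  have hu := u.isLt
  have hv := v.isLt
  have e1 : ∀ x y : ℕ, x < n → y < n → ((n - y + x) % n = 1 ↔ (y + 1) % n = x) := by
    intro x y hx hy
    rcases Nat.lt_or_ge x y with h | h
    · rw [Nat.mod_eq_of_lt (by omega : n - y + x < n)]
      rcases Nat.lt_or_ge (y + 1) n with h' | h'
      · rw [Nat.mod_eq_of_lt h']; omega
      · obtain rfl : n = y + 1 := by omega
        simp; omega
    · rw [show n - y + x = (x - y) + n by omega, Nat.add_mod_right,
        Nat.mod_eq_of_lt (by omega : x - y < n)]
      rcases Nat.lt_or_ge (y + 1) n with h' | h'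
      · rw [Nat.mod_eq_of_lt h']; omega
      · obtain rfl : n = y + 1 := by omega
        simp; omega
  rw [e1 _ _ hu hv, e1 _ _ hv hu, or_comm]

/-- The walk winding around the cycle. -/
def wind (hn : 3 ≤ n) (z : ℤ) : Fin n :=
  ⟨(z % n).toNat, by have := Int.emod_nonneg z (b := n) (by omega)
                     have := Int.emod_lt_of_pos z (b := n) (by omega); omega⟩

lemma wind_val (hn : 3 ≤ n) (z : ℤ) : ((wind hn z).val : ℤ) = z % n :=
  Int.toNat_of_nonneg (Int.emod_nonneg z (by omega))

lemma wind_isWalk (hn : 3 ≤ n) : IsWalk (SimpleGraph.cycleGraph n) (wind hn) := by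
  intro z
  rw [cycle_adj hn]
  left
  zify
  rw [wind_val, wind_val, Int.emod_add_emod]

lemma wind_surj (hn : 3 ≤ n) (s : ℤ) (v : Fin n) :
    ∃ i < n, wind hn (s + (i : ℕ)) = v ∧ ∀ j < n, wind hn (s + (j : ℕ)) = v → j = i := by
  have hv := v.isLt
  have h1 := Int.emod_nonneg ((v : ℤ) - s) (b := n) (by omega)
  have h2 := Int.emod_lt_of_pos ((v : ℤ) - s) (b := n) (by omega)
  refine ⟨(((v : ℤ) - s) % n).toNat, by omega, ?_, ?_⟩
  · apply Fin.ext
    zify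
    rw [wind_val, Int.toNat_of_nonneg h1, Int.add_emod_emod, add_sub_cancel]
    exact Int.emod_eq_of_lt (by omega) (by omega)
  · rintro j hj rfl
    zify
    rw [Int.toNat_of_nonneg h1, wind_val, Int.emod_sub_emod, add_sub_cancel_left]
    exact (Int.emod_eq_of_lt (by omega) (by omega)).symm

lemma cfg_wind (hn : 3 ≤ n) (C : Fin n → ℕ) (s : ℤ) :
    cfg (wind hn) (C ∘ wind hn) s n = C := by
  funext v
  obtain ⟨i, hi, hv, huniq⟩ := wind_surj hn s v
  unfold cfg
  rw [Finset.sum_apply, sum_eq_single i]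
  · subst hv; simp
  · intro j hj hne
    rw [Pi.single_eq_of_ne]
    exact fun h => hne (huniq j (mem_range.1 hj) h.symm)
  · intro h; exact absurd (mem_range.2 hi) h

lemma arc_wind (hn : 3 ≤ n) (C : Fin n → ℕ) (s : ℤ) :
    arc (C ∘ wind hn) s n = ∑ v, C v := by
  conv_rhs => rw [← cfg_wind hn C s]
  unfold cfg arc
  simp only [Finset.sum_apply]
  rw [sum_comm]
  refine sum_congr rfl fun i _ => ?_
  simp

lemma seg_wind (hn : 3 ≤ n) (s : ℤ) : seg (wind hn) s n = Set.univ := by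
  ext v
  obtain ⟨i, hi, hv, -⟩ := wind_surj hn s v
  simp only [Set.mem_univ, iff_true]
  exact ⟨s + i, by omega, by omega, hv.symm⟩

lemma Sol.solvable {V : Type*} [DecidableEq V] {G : SimpleGraph V} {C : V → ℕ}
    (h : Sol G C Set.univ) : DomCoverSolvable G C := by
  obtain ⟨C', h1, h2⟩ := h
  exact ⟨C', h1, fun v => h2 v trivial⟩

/-- The number of pebbles needed on a single vertex of the cycle `C_n` in order to dominate it;
it turns out to be `ψ(C_n)`. -/
def F (n : ℕ) : ℕ := Q (n / 2) + H ((n - 1) / 2 + 1)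

lemma exists_le_sum {V : Type*} [Fintype V] [DecidableEq V] (C : V → ℕ) {T : ℕ}
    (hT : T ≤ ∑ v, C v) : ∃ D ≤ C, ∑ v, D v = T := by
  induction hd : (∑ v, C v) - T generalizing C with
  | zero => exact ⟨C, le_rfl, by omega⟩
  | succ d ih =>
    obtain ⟨v, -, hv⟩ : ∃ v ∈ univ, C v ≠ 0 := by
      by_contra! h
      have : ∑ v, C v = 0 := sum_eq_zero h
      omega
    have hs : ∑ u, Function.update C v (C v - 1) u + 1 = ∑ u, C u := by
      rw [sum_update_of_mem (mem_univ v), ← add_sum_erase univ C (mem_univ v),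
        sdiff_singleton_eq_erase]
      omega
    obtain ⟨D, hD, hDs⟩ := ih (Function.update C v (C v - 1)) (by omega) (by omega)
    refine ⟨D, hD.trans ?_, hDs⟩
    intro u
    by_cases h : u = v
    · subst h; simp
    · simp [h]

/-- Let the cycle carry `F n` pebbles, and cut it into `c`, the `(n - 1) / 2` vertices before `c` and
the `n / 2` vertices after it. If neither side carries more than its cost `Q`, then `c` holds
enough pebbles to make up for what both sides lack. -/
lemma sol_of_center (hn : 3 ≤ n) (C : Fin n → ℕ) (hC : ∑ v, C v = F n) (c : ℤ)
    (h1 : arc (C ∘ wind hn) (c - ((n - 1) / 2 : ℕ)) ((n - 1) / 2) ≤ Q ((n - 1) / 2))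
    (h2 : arc (C ∘ wind hn) (c + 1) (n / 2) ≤ Q (n / 2)) :
    Sol (SimpleGraph.cycleGraph n) C Set.univ := by
  have e : (n - 1) / 2 + (n / 2 + 1) = n := by omega
  have ht : arc (C ∘ wind hn) (c - ((n - 1) / 2 : ℕ)) ((n - 1) / 2 + (n / 2 + 1)) = ∑ v, C v := by
    rw [e]; exact arc_wind hn C _
  rw [arc_add, sub_add_cancel, arc_succ, hC] at ht
  have hF : F n = Q (n / 2) + (Q ((n - 1) / 2) + eps ((n - 1) / 2) (n / 2)) := by
    unfold F eps
    simp only [H]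
    congr 2
    split_ifs <;> omega
  have := center (pathSol _) (pathSol _) (wind_isWalk hn) (C ∘ wind hn) c
    (A := (n - 1) / 2) (B := n / 2) (by omega)
  rwa [e, cfg_wind, seg_wind] at this

/-- Every configuration of `F n` pebbles can be made dominating. Call an arc of `n / 2`
vertices heavy if it carries more than `Q (n / 2)` pebbles. The first vertex of the last heavy arc
in a rotation is a centre as in `sol_of_center`. If there is no heavy arc, either the
cycle splits into two paths which are both rich enough for `pathSol`, or the poor
one of the two ends next to a centre. -/
lemma upper_eq (hn : 3 ≤ n) (C : Fin n → ℕ) (hC : ∑ v, C v = F n) :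
    Sol (SimpleGraph.cycleGraph n) C Set.univ := by
  set a := C ∘ wind hn with ha
  obtain ⟨k, hk⟩ : ∃ k, n / 2 = k := ⟨_, rfl⟩
  obtain ⟨l, hl⟩ : ∃ l, (n - 1) / 2 = l := ⟨_, rfl⟩
  have hF : F n = Q k + H (l + 1) := by rw [F, hk, hl]
  have hH := H_succ_le l
  have hlk : Q l ≤ Q k := Q_mono (by omega)
  have htot : ∀ s x y, x + y ≤ n → arc a s x + arc a (s + x) y ≤ F n := by
    intro s x y hxy
    have := arc_wind hn C s
    obtain ⟨d, hd⟩ := Nat.exists_eq_add_of_le hxy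
    have e : arc a s (x + y + d) = F n := by rw [← hd, ← hC]; exact this
    rw [arc_add, arc_add] at e
    omega
  have key := sol_of_center hn C hC
  rw [hk, hl, ← ha] at key
  by_cases hheavy : ∃ s, Q k < arc a s k
  · -- Rotate a heavy arc by one step at a time until it is heavy for the last time.
    obtain ⟨s, hs⟩ := hheavy
    have hlast : ∃ i : ℕ, ¬ Q k < arc a (s + i) k :=
      ⟨k, by have := htot s k k (by omega); omega⟩
    classical
    obtain ⟨i, hi, hmin⟩ : ∃ i : ℕ, (¬ Q k < arc a (s + i) k) ∧
        ∀ j < i, Q k < arc a (s + (j : ℕ)) k :=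
      ⟨Nat.find hlast, Nat.find_spec hlast, fun j hj => by
        have := Nat.find_min hlast hj; push Not at this; exact this⟩
    have hi0 : i ≠ 0 := by rintro rfl; simp at hi; omega
    obtain ⟨j, rfl⟩ := Nat.exists_eq_succ_of_ne_zero hi0
    have hj := hmin j (by omega)
    refine key (s + j) ?_ ?_
    · have := htot (s + j - l) l k (by omega)
      rw [sub_add_cancel] at this
      omega
    · push_cast at hi
      rw [← add_assoc] at hi
      omega
  · push Not at hheavy
    have eln : k + (l + 1) = n := by omega
    by_cases h1 : H k ≤ arc a 0 k
    · by_cases h2 : H (l + 1) ≤ arc a (0 + k) (l + 1)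
      · have := pathSol_split (pathSol k) (pathSol (l + 1)) (wind_isWalk hn) a 0 h1 h2
        rwa [eln, cfg_wind, seg_wind] at this
      · refine key (k + (l + 1 : ℕ)) ?_ (hheavy _)
        rw [arc_succ] at h2
        rw [show (k : ℤ) + (l + 1 : ℕ) - (l : ℕ) = 0 + k + 1 by push_cast; ring]
        omega
    · refine key k ?_ (hheavy _)
      obtain ⟨k', rfl⟩ : ∃ k', k = k' + 1 := ⟨k - 1, by omega⟩
      have hk' := H_succ_le k'
      have hQ : Q k' ≤ Q l := Q_mono (by omega)
      -- The window of length `l` ending before `k` lies in `[0, k)`.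
      rcases (by omega : l = k' + 1 ∨ l = k') with rfl | rfl
      · rw [sub_self]; omega
      · rw [arc_succ] at h1
        rw [show ((l + 1 : ℕ) : ℤ) - (l : ℕ) = 0 + 1 by push_cast; ring]
        omega

/-- The upper bound `ψ(C_n) ≤ F n`. -/
lemma upper (hn : 3 ≤ n) : F n ∈ DomCoverSet (SimpleGraph.cycleGraph n) := by
  intro C hC
  obtain ⟨D, hD, hDs⟩ := exists_le_sum C hC
  exact ((upper_eq hn D hDs).le hD).solvable

end Cycle

/-! ### The lower bound for a single vertex -/

lemma Q_add_three (k : ℕ) : Q (k + 3) = Q k + 2 ^ (k + 2) := by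
  induction k with
  | zero => decide
  | succ k ih =>
    have h1 := Q_succ (k + 3)
    have h2 := Q_succ k
    rw [show (k + 3) % 3 = k % 3 by omega, ih] at h1
    rw [show k + 1 + 3 = k + 3 + 1 by ring, h1, h2, show k + 1 + 2 = k + 2 + 1 by ring,
      pow_succ 2 (k + 2)]
    ring

/-- The weight `∑ f e * 2 ^ e`, for `1 ≤ e ≤ m`, of pebbles placed along a ray. -/
def W (f : ℕ → ℕ) (m : ℕ) : ℕ := ∑ e ∈ range m, f (e + 1) * 2 ^ (e + 1)

lemma W_succ (f : ℕ → ℕ) (m : ℕ) : W f (m + 1) = W f m + f (m + 1) * 2 ^ (m + 1) :=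
  sum_range_succ _ _

/-- Weight needed on a line, with `R j` pebbles at `j` and `L j` pebbles at `-j`, for dominating
the positions `-l, …, k`. Beyond the small cases, the last three vertices able to dominate the
position `k` contribute at least `2 ^ (k - 1)`, and removing them leaves `k - 3`. -/
lemma line_weight (k l : ℕ) (hkl : k = l ∨ k = l + 1) (R L : ℕ → ℕ)
    (h0 : R 0 = L 0) (hc : 0 < R 0 + R 1 + L 1)
    (hR : ∀ j < k, 0 < R j + R (j + 1) + R (j + 2))
    (hL : ∀ j < l, 0 < L j + L (j + 1) + L (j + 2)) :
    Q k + H (l + 1) ≤ R 0 + W R (k + 1) + W L (l + 1) := by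
  induction l using Nat.strong_induction_on generalizing k with
  | _ l ih =>
  rcases Nat.lt_or_ge l 3 with hl | hl
  · have q3 : Q 3 = 4 := by decide
    have e1 : H 1 = 1 := by decide
    have e2 : H 2 = 1 := by decide
    have e3 : H 3 = 2 := by decide
    have a0 : 0 < k → 0 < R 0 + R 1 + R 2 := hR 0
    have a1 : 1 < k → 0 < R 1 + R 2 + R 3 := hR 1
    have a2 : 2 < k → 0 < R 2 + R 3 + R 4 := hR 2
    have b0 : 0 < l → 0 < L 0 + L 1 + L 2 := hL 0
    have b1 : 1 < l → 0 < L 1 + L 2 + L 3 := hL 1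
    rcases (by omega : l = 0 ∨ l = 1 ∨ l = 2) with rfl | rfl | rfl <;>
    rcases hkl with rfl | rfl <;>
    simp only [Nat.reduceAdd, W, sum_range_succ, sum_range_zero, Nat.reducePow, Q_zero, Q_one,
      Q_two, q3, e1, e2, e3] <;> omega
  · obtain ⟨l, rfl⟩ := Nat.exists_eq_add_of_le' hl
    obtain ⟨k, rfl⟩ : ∃ m, k = m + 3 := ⟨k - 3, by omega⟩
    have := ih l (by omega) k (by omega) (fun j hj => hR j (by omega))
      (fun j hj => hL j (by omega))
    have hH : H (l + 3 + 1) = H (l + 1) + 2 ^ (l + 2) := by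
      simp only [H]
      rw [Q_add_three, show (l + 3) % 3 = l % 3 by omega]; ring
    have tail : ∀ (f : ℕ → ℕ) (m : ℕ), 0 < f (m + 2) + f (m + 2 + 1) + f (m + 2 + 2) →
        W f (m + 1) + 2 ^ (m + 2) ≤ W f (m + 3 + 1) := by
      intro f m hf
      rw [W_succ f (m + 3), W_succ f (m + 2), W_succ f (m + 1)]
      have : 1 ≤ f (m + 2) + f (m + 3) * 2 + f (m + 4) * 4 := by
        have : 0 < f (m + 2) + f (m + 3) + f (m + 4) := hf
        omega
      calc _ ≤ W f (m + 1) + (f (m + 2) + f (m + 3) * 2 + f (m + 4) * 4) * 2 ^ (m + 2) := by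
            gcongr; exact Nat.le_mul_of_pos_left _ this
        _ = _ := by ring
    have h1 := tail R k (hR (k + 2) (by omega))
    have h2 := tail L l (hL (l + 2) (by omega))
    rw [Q_add_three, hH]
    omega

lemma F_add_six (n : ℕ) (hn : 1 ≤ n) :
    F (n + 6) = F n + 2 ^ (n / 2 + 2) + 2 ^ ((n - 1) / 2 + 2) := by
  unfold F
  rw [show (n + 6) / 2 = n / 2 + 3 by omega, show (n + 6 - 1) / 2 = (n - 1) / 2 + 3 by omega]
  simp only [H]
  rw [Q_add_three, Q_add_three, show ((n - 1) / 2 + 3) % 3 = (n - 1) / 2 % 3 by omega]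
  ring

/-- A dominating configuration of the cycle, given by the `n`-periodic function `c`, has weight at
least `F n`, a pebble at distance `d` from the vertex `0` having weight `2 ^ d`. The
cycle is cut near the antipode of `0`, `line_weight` is applied to a line shorter by three on
both sides, and the few vertices around the antipode pay for the difference. -/
lemma cycle_weight {n : ℕ} (hn : 3 ≤ n) (c : ℕ → ℕ) (hper : ∀ j, c (j + n) = c j)
    (hdom : ∀ j, 0 < c j + c (j + 1) + c (j + 2)) :
    F n ≤ c 0 + W c (n / 2) + W (fun j => c (n - j)) ((n - 1) / 2) := by
  have p0 := hper 0
  have p1 := hper 1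
  rw [zero_add] at p0
  rw [add_comm 1 n] at p1
  rcases Nat.lt_or_ge n 7 with hn7 | hn7
  · have f3 : F 3 = 1 := by decide
    have f4 : F 4 = 3 := by decide
    have f5 : F 5 = 4 := by decide
    have f6 : F 6 = 6 := by decide
    have a0 : 0 < c 0 + c 1 + c 2 := hdom 0
    have a1 : 0 < c 1 + c 2 + c 3 := hdom 1
    have a2 : 0 < c 2 + c 3 + c 4 := hdom 2
    have a3 : 0 < c 3 + c 4 + c 5 := hdom 3
    have a4 : 0 < c 4 + c 5 + c 6 := hdom 4
    have a5 : 0 < c 5 + c 6 + c 7 := hdom 5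
    rcases (by omega : n = 3 ∨ n = 4 ∨ n = 5 ∨ n = 6) with rfl | rfl | rfl | rfl <;>
    simp only [Nat.reduceAdd, Nat.reduceSub, Nat.reduceDiv, W, sum_range_succ, sum_range_zero,
      Nat.reducePow, f3, f4, f5, f6] at p1 ⊢ <;> omega
  obtain ⟨m, rfl⟩ : ∃ m, n = m + 6 := ⟨n - 6, by omega⟩
  have hF := F_add_six m (by omega)
  set L : ℕ → ℕ := fun j => c (m + 6 - j) with hLdef
  have hLdom : ∀ j < m, 0 < L j + L (j + 1) + L (j + 2) := fun j hj => by
    have := hdom (m + 6 - (j + 2))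
    rw [show m + 6 - (j + 2) + 1 = m + 6 - (j + 1) by omega,
      show m + 6 - (j + 2) + 2 = m + 6 - j by omega] at this
    simp only [hLdef]; omega
  have hL0 : c 0 = L 0 := p0.symm
  have hc : 0 < c 0 + c 1 + L 1 := by
    have := hdom (m + 5)
    rw [show m + 5 + 1 = m + 6 by ring, show m + 5 + 2 = m + 6 + 1 by ring, p0, p1] at this
    show 0 < c 0 + c 1 + c (m + 5)
    omega
  obtain ⟨l, rfl | rfl⟩ : ∃ l, m = 2 * l + 1 ∨ m = 2 * l + 2 := ⟨(m - 1) / 2, by omega⟩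
  · -- Odd cycle: two antipodal vertices.
    have hline := line_weight l l (by omega) c L hL0 hc (fun j _ => hdom j)
      (fun j hj => hLdom j (by omega))
    have hFm : F (2 * l + 1) = Q l + H (l + 1) := by
      unfold F
      rw [show (2 * l + 1) / 2 = l by omega, show (2 * l + 1 - 1) / 2 = l by omega]
    rw [hF, hFm]
    rw [show (2 * l + 1) / 2 = l by omega, show (2 * l + 1 - 1) / 2 = l by omega,
      show (2 * l + 1 + 6) / 2 = l + 1 + 1 + 1 by omega,
      show (2 * l + 1 + 6 - 1) / 2 = l + 1 + 1 + 1 by omega, W_succ _ (l + 1 + 1),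
      W_succ _ (l + 1), W_succ _ (l + 1 + 1), W_succ _ (l + 1)]
    have t1 := hdom (l + 2)
    have t2 := hdom (l + 3)
    have x1 : L (l + 3) = c (l + 4) := by simp only [hLdef]; congr 1; omega
    have x2 : L (l + 2) = c (l + 5) := by simp only [hLdef]; congr 1; omega
    rw [show l + 2 + 1 = l + 3 by ring, show l + 2 + 2 = l + 4 by ring] at t1
    rw [show l + 3 + 1 = l + 4 by ring, show l + 3 + 2 = l + 5 by ring] at t2
    rw [show l + 1 + 1 + 1 = l + 3 by ring, show l + 1 + 1 = l + 2 by ring, x1, x2]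
    have ht : 2 ≤ c (l + 2) + 2 * c (l + 3) + 2 * c (l + 4) + c (l + 5) := by omega
    have := Nat.mul_le_mul_right (2 ^ (l + 2)) ht
    rw [show 2 ^ (l + 3) = 2 * 2 ^ (l + 2) by ring]
    linarith
  · -- Even cycle: one antipodal vertex, `l + 4`.
    have hFm : F (2 * l + 2) = Q (l + 1) + H (l + 1) := by
      unfold F
      rw [show (2 * l + 2) / 2 = l + 1 by omega, show (2 * l + 2 - 1) / 2 = l by omega]
    rw [hF, hFm]
    rw [show (2 * l + 2) / 2 = l + 1 by omega, show (2 * l + 2 - 1) / 2 = l by omega,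
      show (2 * l + 2 + 6) / 2 = l + 1 + 1 + 1 + 1 by omega,
      show (2 * l + 2 + 6 - 1) / 2 = l + 1 + 1 + 1 by omega, W_succ _ (l + 1 + 1 + 1)]
    have hW : ∀ f : ℕ → ℕ, W f (l + 1 + 1 + 1) = W f (l + 2) + f (l + 3) * 2 ^ (l + 3) ∧
        W f (l + 2) = W f (l + 1) + f (l + 2) * 2 ^ (l + 2) :=
      fun f => ⟨W_succ _ _, W_succ _ _⟩
    have t1 := hdom (l + 2)
    have t2 := hdom (l + 3)
    have t3 := hdom (l + 4)
    have x1 : L (l + 3) = c (l + 5) := by simp only [hLdef]; congr 1; omega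
    have x2 : L (l + 2) = c (l + 6) := by simp only [hLdef]; congr 1; omega
    rw [show l + 2 + 1 = l + 3 by ring, show l + 2 + 2 = l + 4 by ring] at t1
    rw [show l + 3 + 1 = l + 4 by ring, show l + 3 + 2 = l + 5 by ring] at t2
    rw [show l + 4 + 1 = l + 5 by ring, show l + 4 + 2 = l + 6 by ring] at t3
    rw [show l + 1 + 1 + 1 + 1 = l + 4 by ring, show l + 1 + 2 = l + 3 by ring]
    obtain ⟨c1, c2⟩ := hW c
    obtain ⟨L1, L2⟩ := hW L
    have e3 : 2 ^ (l + 3) = 2 * 2 ^ (l + 2) := by ring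
    have e4 : 2 ^ (l + 4) = 4 * 2 ^ (l + 2) := by ring
    rw [x1] at L1
    rw [x2] at L2
    rw [c1, L1, e3, e4]
    -- The line is longer by one on one side; if the pebbles around the antipode do not pay for one
    -- choice of that side, they pay for the other.
    by_cases hcase : 3 ≤ 2 * c (l + 3) + 4 * c (l + 4) + 2 * c (l + 5) + c (l + 6)
    · have hline := line_weight (l + 1) l (by omega) c L hL0 hc (fun j _ => hdom j)
        (fun j hj => hLdom j (by omega))
      rw [show l + 1 + 1 = l + 2 by ring] at hline
      rw [L2]
      have := Nat.mul_le_mul_right (2 ^ (l + 2)) hcase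
      linarith
    · have hline := line_weight (l + 1) l (by omega) L c hL0.symm (by omega)
        (fun j hj => hLdom j (by omega)) (fun j _ => hdom j)
      rw [show l + 1 + 1 = l + 2 by ring, ← hL0] at hline
      rw [c2]
      have hcase' : 3 ≤ c (l + 2) + 2 * c (l + 3) + 4 * c (l + 4) + 2 * c (l + 5) := by omega
      have := Nat.mul_le_mul_right (2 ^ (l + 2)) hcase'
      linarith

section Potential

variable {n : ℕ}

/-- The distance from the vertex `0` of the cycle. -/
def dist0 (n i : ℕ) : ℕ := min i (n - i)

/-- The weight of a configuration of the cycle: a pebble at distance `d` from the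
vertex `0` counts `2 ^ d`. -/
def weight (C : Fin n → ℕ) : ℕ := ∑ v : Fin n, C v * 2 ^ dist0 n v

lemma weight_add (C D : Fin n → ℕ) : weight (C + D) = weight C + weight D := by
  simp only [weight, Pi.add_apply, add_mul, sum_add_distrib]

lemma weight_single (v : Fin n) (m : ℕ) :
    weight (Pi.single v m) = m * 2 ^ dist0 n v := by
  unfold weight
  rw [sum_eq_single v]
  · simp
  · intro u _ hu; simp [hu]
  · simp

lemma weight_move (hn : 3 ≤ n) {C C' : Fin n → ℕ}
    (h : PebblingMove (SimpleGraph.cycleGraph n) C C') : weight C' ≤ weight C := by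
  obtain ⟨u, v, huv, h2, rfl⟩ := h
  have hne : u ≠ v := huv.ne
  set D := Function.update C u (C u - 2) with hD
  have e1 : C = D + Pi.single u 2 := by
    funext z
    by_cases hz : z = u
    · subst hz; simp [hD]; omega
    · simp [hD, hz]
  have e2 : Function.update D v (C v + 1) = D + Pi.single v 1 := by
    funext z
    by_cases hz : z = v
    · subst hz; simp [hD, hne.symm]
    · simp [hz]
  rw [e2]
  conv_rhs => rw [e1]
  rw [weight_add, weight_add, weight_single, weight_single, one_mul, mul_comm 2, ← pow_succ]
  gcongr
  · norm_num
  · rw [cycle_adj hn] at huv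
    have hu := u.isLt
    have hv := v.isLt
    have key : ∀ x y : ℕ, x < n → (x + 1) % n = y → y = x + 1 ∨ (y = 0 ∧ x + 1 = n) := by
      intro x y hx h
      rcases Nat.lt_or_ge (x + 1) n with h' | h'
      · rw [Nat.mod_eq_of_lt h'] at h; omega
      · obtain rfl : n = x + 1 := by omega
        simp at h; omega
    unfold dist0
    rcases huv with h | h
    · have := key _ _ hu h; omega
    · have := key _ _ hv h; omega

lemma weight_reach (hn : 3 ≤ n) {C C' : Fin n → ℕ}
    (h : Relation.ReflTransGen (PebblingMove (SimpleGraph.cycleGraph n)) C C') :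
    weight C' ≤ weight C := by
  induction h with
  | refl => exact le_rfl
  | tail _ h ih => exact (weight_move hn h).trans ih

lemma weight_eq (hn : 3 ≤ n) (C : Fin n → ℕ) (c : ℕ → ℕ) (hc : ∀ v : Fin n, c v = C v) :
    weight C = c 0 + W c (n / 2) + W (fun j => c (n - j)) ((n - 1) / 2) := by
  have h1 : weight C = ∑ i ∈ range n, c i * 2 ^ dist0 n i := by
    rw [sum_range]
    exact sum_congr rfl fun v _ => by rw [hc]
  rw [h1]
  have e : ∑ i ∈ range n, c i * 2 ^ dist0 n i =
      ∑ i ∈ range (n / 2 + 1 + (n - 1) / 2), c i * 2 ^ dist0 n i := by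
    rw [show n / 2 + 1 + (n - 1) / 2 = n by omega]
  rw [e, sum_range_add, sum_range_succ', ← sum_range_reflect _ ((n - 1) / 2)]
  have a1 : ∑ i ∈ range (n / 2), c (i + 1) * 2 ^ dist0 n (i + 1) = W c (n / 2) := by
    refine sum_congr rfl fun i hi => ?_
    have := mem_range.1 hi
    rw [show dist0 n (i + 1) = i + 1 by unfold dist0; omega]
  have a2 : ∑ j ∈ range ((n - 1) / 2), c (n / 2 + 1 + ((n - 1) / 2 - 1 - j)) *
      2 ^ dist0 n (n / 2 + 1 + ((n - 1) / 2 - 1 - j)) =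
      W (fun j => c (n - j)) ((n - 1) / 2) := by
    refine sum_congr rfl fun i hi => ?_
    have := mem_range.1 hi
    rw [show n / 2 + 1 + ((n - 1) / 2 - 1 - i) = n - (i + 1) by omega,
      show dist0 n (n - (i + 1)) = i + 1 by unfold dist0; omega]
  rw [a1, a2]
  simp [dist0]; ring

lemma weight_dom (hn : 3 ≤ n) (C : Fin n → ℕ)
    (hC : IsDomSet (SimpleGraph.cycleGraph n) {v | 0 < C v}) : F n ≤ weight C := by
  set c : ℕ → ℕ := fun j => C ⟨j % n, Nat.mod_lt _ (by omega)⟩ with hcdef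
  have hper : ∀ j, c (j + n) = c j := fun j => by simp [hcdef]
  rw [weight_eq hn C c (fun v => by simp [hcdef, Nat.mod_eq_of_lt v.isLt])]
  refine cycle_weight hn c hper fun j => ?_
  have hval : ∀ u : Fin n, ∀ i, u.val = i % n → c i = C u := fun u i hu => by
    simp only [hcdef]; congr 1; exact Fin.ext hu.symm
  rcases hC ⟨(j + 1) % n, Nat.mod_lt _ (by omega)⟩ with h | ⟨u, h, hu⟩
  · have : 0 < c (j + 1) := h
    omega
  · rw [cycle_adj hn] at hu
    have hpos : 0 < C u := h
    rcases hu with hu | hu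
    · have : u.val = j % n := by
        have h1 : u.val + 1 ≡ j + 1 [MOD n] := by
          unfold Nat.ModEq; exact hu
        have h2 : u.val % n = j % n := Nat.ModEq.add_right_cancel' 1 h1
        rwa [Nat.mod_eq_of_lt u.isLt] at h2
      rw [hval u j this]; omega
    · rw [hval u (j + 2) (by rw [← hu]; simp [Nat.add_assoc])]
      omega

/-- Fewer than `F n` pebbles on the vertex `0` do not suffice. -/
lemma lower (hn : 3 ≤ n) {m : ℕ} (hm : m < F n) :
    ¬ DomCoverSolvable (SimpleGraph.cycleGraph n)
      (fun w => if w = (⟨0, by omega⟩ : Fin n) then m else 0) := by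
  rintro ⟨C', hr, hd⟩
  have h1 := weight_reach hn hr
  have h2 := weight_dom hn C' hd
  have h3 : weight (fun w => if w = (⟨0, by omega⟩ : Fin n) then m else 0) = m := by
    have := weight_single (⟨0, by omega⟩ : Fin n) m
    simp only [dist0, zero_le, inf_of_le_left, pow_zero, mul_one] at this
    convert this using 2
    funext w
    simp [Pi.single_apply]
  omega

lemma F_pos (hn : 3 ≤ n) : 0 < F n := by
  have := Q_le_H_succ ((n - 1) / 2)
  rcases Nat.lt_or_ge n 4 with h | h
  · obtain rfl : n = 3 := by omega
    decide
  · have := two_le_Q (L := n / 2) (by omega)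
    unfold F; omega

end Potential

end DomCover

/-- For `n ≥ 3`, the value of `ψ(C_n)` is attained by placing all pebbles on a
single vertex: there is a vertex `v` of the cycle `C_n` such that the
configuration with `ψ(C_n) - 1` pebbles on `v` and none elsewhere is not
domination-cover-solvable. -/
theorem psi_cycle_worst_on_single_vertex (n : ℕ) (hn : 3 ≤ n) (p : ℕ)
    (hp : IsLeast (DomCoverSet (SimpleGraph.cycleGraph n)) p) :
    ∃ v : Fin n, ¬ DomCoverSolvable (SimpleGraph.cycleGraph n)
      (fun w => if w = v then p - 1 else 0) := by
  refine ⟨⟨0, by omega⟩, DomCover.lower hn ?_⟩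
  have h1 := hp.2 (DomCover.upper hn)
  have h2 := DomCover.F_pos hn
  omega
end
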